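/- Let Q be a 4^n × 4^n complex matrix such that [H ⊗ I + I ⊗ H, Q] = 0 for every generator H ∈ {Z_j : 1 ≤ j ≤ n} ∪ {X_j X_{j+1} : 1 ≤ j ≤ n−1} (I the 2^n × 2^n identity). Then Q lies in the complex linear span of the 2(2n+1) operators {Q_κ^0, Q_κ^1 : 0 ≤ κ ≤ 2n}. Consequently, the commutant {Q : [H ⊗ I + I ⊗ H, Q] = 0 for all such H} is a complex vector space of dimension 4n + 2. -/

import Mathlib

open Matrix Complex
open scoped Kronecker

noncomputable section

abbrev QIdx (n : ℕ) := Fin n → Fin 2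
abbrev NMat (n : ℕ) := Matrix (QIdx n) (QIdx n) ℂ
abbrev NMat2 (n : ℕ) := Matrix (QIdx n × QIdx n) (QIdx n × QIdx n) ℂ

/-- The 2×2 Pauli X matrix. -/
def σX : Matrix (Fin 2) (Fin 2) ℂ := !![0, 1; 1, 0]
/-- The 2×2 Pauli Y matrix. -/
def σY : Matrix (Fin 2) (Fin 2) ℂ := !![0, -Complex.I; Complex.I, 0]
/-- The 2×2 Pauli Z matrix. -/
def σZ : Matrix (Fin 2) (Fin 2) ℂ := !![1, 0; 0, -1]

/-- Tensor (Kronecker) product of `n` one-qubit matrices, realized on index type `Fin n → Fin 2`. -/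
def tensor {n : ℕ} (M : Fin n → Matrix (Fin 2) (Fin 2) ℂ) : NMat n :=
  Matrix.of fun f g => ∏ i, M i (f i) (g i)

/-- The Jordan–Wigner Majorana operator `c_μ` (0-based index: `c_{2i} = Z^{⊗i} X I…`,
`c_{2i+1} = Z^{⊗i} Y I…`). -/
def majorana (n : ℕ) (μ : Fin (2 * n)) : NMat n :=
  tensor fun j =>
    if (j : ℕ) < (μ : ℕ) / 2 then σZ
    else if (j : ℕ) = (μ : ℕ) / 2 then (if (μ : ℕ) % 2 = 0 then σX else σY)
    else 1

/-- Ordered product `c^s` of the Majorana operators indexed by a subset `s`. -/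
def cProd (n : ℕ) (s : Finset (Fin (2 * n))) : NMat n :=
  ((s.sort (· ≤ ·)).map (majorana n)).prod

/-- The module `B_κ`: the complex span of products of `κ` distinct Majoranas. -/
def Bspace (n κ : ℕ) : Submodule ℂ (NMat n) :=
  Submodule.span ℂ {M | ∃ s : Finset (Fin (2 * n)), s.card = κ ∧ M = cProd n s}

/-- The Pauli string with `Z` on qubit `j` and identity elsewhere. -/
def pauliZ (n : ℕ) (j : Fin n) : NMat n := tensor fun k => if k = j then σZ else 1

/-- The Pauli string with `X` on qubits `j` and `j+1` and identity elsewhere. -/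
def pauliXX (n : ℕ) (j : Fin n) : NMat n :=
  tensor fun k => if (k : ℕ) = (j : ℕ) ∨ (k : ℕ) = (j : ℕ) + 1 then σX else 1

/-- The parity operator `P = Z^{⊗n}`. -/
def parity (n : ℕ) : NMat n := tensor fun _ => σZ


/-- Normalization constant `(d √C(2n,κ))⁻¹` with `d = 2^n`. -/
def Qnorm (n κ : ℕ) : ℂ := ((2 ^ n : ℂ) * ((Real.sqrt (Nat.choose (2 * n) κ) : ℝ) : ℂ))⁻¹

/-- The quadratic symmetry `Q_κ^0 = (d √C(2n,κ))⁻¹ Σ_{|s|=κ} c^s ⊗ c^s`. -/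
def Q0 (n κ : ℕ) : NMat2 n :=
  Qnorm n κ • ∑ s ∈ Finset.powersetCard κ (Finset.univ : Finset (Fin (2 * n))),
    (cProd n s) ⊗ₖ (cProd n s)

/-- The sum of the (1-based) elements of `s`, i.e. `π(s)`. -/
def piSum (n : ℕ) (s : Finset (Fin (2 * n))) : ℕ := ∑ μ ∈ s, ((μ : ℕ) + 1)

/-- The quadratic symmetry
`Q_κ^1 = (d √C(2n,κ))⁻¹ (−i)^n i^{κ mod 2} Σ_{|s|=κ} (−1)^{π(s)} c^s ⊗ c^{s̄}`. -/
def Q1 (n κ : ℕ) : NMat2 n :=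
  (Qnorm n κ * (-Complex.I) ^ n * Complex.I ^ (κ % 2)) •
    ∑ s ∈ Finset.powersetCard κ (Finset.univ : Finset (Fin (2 * n))),
      ((-1 : ℂ)) ^ (piSum n s) • ((cProd n s) ⊗ₖ (cProd n sᶜ))

/-- The matchgate circuit generators `{Z_j} ∪ {X_j X_{j+1}}`. -/
def matchgateGens (n : ℕ) : Set (NMat n) :=
  {M | ∃ j : Fin n, M = pauliZ n j} ∪
  {M | ∃ j : Fin n, (j : ℕ) + 1 < n ∧ M = pauliXX n j}

/-- The two-copy representation `H ⊗ I + I ⊗ H` of a generator `H`. -/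
def bigH (n : ℕ) (H : NMat n) : NMat2 n :=
  H ⊗ₖ (1 : NMat n) + (1 : NMat n) ⊗ₖ H

/-- The commutant of the tensor-square representation generated by the matchgate generators. -/
def quadCommutant (n : ℕ) : Submodule ℂ (NMat2 n) where
  carrier := {Q | ∀ H ∈ matchgateGens n, bigH n H * Q = Q * bigH n H}
  add_mem' := by
    intro a b ha hb H hH
    simp [Matrix.mul_add, Matrix.add_mul, ha H hH, hb H hH]
  zero_mem' := by
    intro H hH
    simp
  smul_mem' := by
    intro c a ha H hH
    simp [Matrix.mul_smul, Matrix.smul_mul, ha H hH]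

lemma tensor_mul {n : ℕ} (M N : Fin n → Matrix (Fin 2) (Fin 2) ℂ) :
    tensor M * tensor N = tensor fun i => M i * N i := by
  ext f g
  simp only [tensor, Matrix.mul_apply, Matrix.of_apply]
  rw [Finset.prod_univ_sum, Fintype.piFinset_univ]
  simp only [Finset.prod_mul_distrib]

lemma tensor_one {n : ℕ} : tensor (fun _ : Fin n => (1 : Matrix (Fin 2) (Fin 2) ℂ)) = 1 := by
  ext f g
  simp only [tensor, Matrix.of_apply, Matrix.one_apply]
  by_cases h : f = g
  · subst h; simp
  · rw [if_neg h]
    obtain ⟨i, hi⟩ := Function.ne_iff.mp h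
    exact Finset.prod_eq_zero (Finset.mem_univ i) (by simp [hi])

lemma tensor_smul {n : ℕ} (a : Fin n → ℂ) (M : Fin n → Matrix (Fin 2) (Fin 2) ℂ) :
    tensor (fun i => a i • M i) = (∏ i, a i) • tensor M := by
  ext f g
  simp [tensor, Finset.prod_mul_distrib]

lemma XX : σX * σX = 1 := by
  ext i j; fin_cases i <;> fin_cases j <;> simp [σX, Matrix.mul_apply]
lemma YY : σY * σY = 1 := by
  ext i j; fin_cases i <;> fin_cases j <;> simp [σY, Matrix.mul_apply]
lemma ZZ : σZ * σZ = 1 := by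
  ext i j; fin_cases i <;> fin_cases j <;> simp [σZ, Matrix.mul_apply]
lemma XY : σX * σY = Complex.I • σZ := by
  ext i j; fin_cases i <;> fin_cases j <;> simp [σX, σY, σZ, Matrix.mul_apply]
lemma YX : σY * σX = (-1 : ℂ) • (σX * σY) := by
  ext i j; fin_cases i <;> fin_cases j <;> simp [σX, σY, σZ, Matrix.mul_apply]
lemma XZ : σX * σZ = (-1 : ℂ) • (σZ * σX) := by
  ext i j; fin_cases i <;> fin_cases j <;> simp [σX, σY, σZ, Matrix.mul_apply]
lemma YZ : σY * σZ = (-1 : ℂ) • (σZ * σY) := by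
  ext i j; fin_cases i <;> fin_cases j <;> simp [σX, σY, σZ, Matrix.mul_apply]
lemma YZ' : σY * σZ = Complex.I • σX := by
  ext i j; fin_cases i <;> fin_cases j <;> simp [σX, σY, σZ, Matrix.mul_apply]

lemma maj_sq (n : ℕ) (μ : Fin (2 * n)) : majorana n μ * majorana n μ = 1 := by
  rw [majorana, tensor_mul, ← tensor_one]
  congr 1; funext j
  split_ifs <;> simp [XX, YY, ZZ]

lemma maj_anti_lt (n : ℕ) (μ ν : Fin (2 * n)) (h : μ < ν) :
    majorana n μ * majorana n ν = (-1 : ℂ) • (majorana n ν * majorana n μ) := by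
  have hμ : (μ : ℕ) / 2 < n := by omega
  have h' : (μ : ℕ) < ν := h
  have : (-1 : ℂ) = ∏ i : Fin n, if i = ⟨(μ : ℕ) / 2, hμ⟩ then (-1 : ℂ) else 1 := by simp
  rw [majorana, majorana, tensor_mul, tensor_mul, this, ← tensor_smul]
  congr 1; funext j
  simp only [Fin.ext_iff]
  split_ifs <;> first | omega | simp [XZ, YZ, YX]

lemma maj_anti (n : ℕ) (μ ν : Fin (2 * n)) (h : μ ≠ ν) :
    majorana n μ * majorana n ν = (-1 : ℂ) • (majorana n ν * majorana n μ) := by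
  rcases lt_or_gt_of_ne h with h | h
  · exact maj_anti_lt n μ ν h
  · rw [maj_anti_lt n ν μ h]; simp

lemma pauliZ_eq (n : ℕ) (j : Fin n) (a b : Fin (2 * n)) (ha : (a : ℕ) = 2 * j)
    (hb : (b : ℕ) = 2 * j + 1) :
    majorana n a * majorana n b = Complex.I • pauliZ n j := by
  have : Complex.I = ∏ i : Fin n, if i = j then Complex.I else 1 := by simp
  rw [majorana, majorana, tensor_mul, pauliZ, this, ← tensor_smul]
  congr 1; funext i
  simp only [Fin.ext_iff]
  split_ifs <;> first | omega | simp [XY, ZZ]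

lemma pauliXX_eq (n : ℕ) (j : Fin n) (a b : Fin (2 * n)) (ha : (a : ℕ) = 2 * j + 1)
    (hb : (b : ℕ) = 2 * j + 2) :
    majorana n a * majorana n b = Complex.I • pauliXX n j := by
  have : Complex.I = ∏ i : Fin n, if i = j then Complex.I else 1 := by simp
  rw [majorana, majorana, tensor_mul, pauliXX, this, ← tensor_smul]
  congr 1; funext i
  simp only [Fin.ext_iff]
  split_ifs <;> first | omega | simp [YZ', ZZ]

lemma cProd_empty (n : ℕ) : cProd n ∅ = 1 := by simp [cProd]

lemma cProd_insert (n : ℕ) (a : Fin (2 * n)) (s : Finset (Fin (2 * n)))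
    (h : ∀ b ∈ s, a < b) : cProd n (insert a s) = majorana n a * cProd n s := by
  unfold cProd
  rw [Finset.sort_insert (r := (· ≤ ·)) (fun b hb => (h b hb).le) (fun h' => lt_irrefl _ (h a h'))]
  simp

lemma cProd_union (n : ℕ) (s t : Finset (Fin (2 * n))) (h : ∀ a ∈ s, ∀ b ∈ t, a < b) :
    cProd n (s ∪ t) = cProd n s * cProd n t := by
  induction s using Finset.induction_on_min with
  | empty => simp [cProd_empty]
  | insert a s ha ih =>
    rw [Finset.insert_union, cProd_insert, cProd_insert n a s ha, ih, mul_assoc]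
    · intro x hx; exact h x (Finset.mem_insert_of_mem hx)
    · intro b hb
      rcases Finset.mem_union.mp hb with hb | hb
      · exact ha b hb
      · exact h a (Finset.mem_insert_self _ _) b hb

lemma cProd_comm_of (n : ℕ) (P : NMat n) (s : Finset (Fin (2 * n)))
    (h : ∀ a ∈ s, Commute P (majorana n a)) : Commute P (cProd n s) := by
  apply Commute.list_prod_right
  simpa using h

lemma pair_comm (n : ℕ) (a b μ : Fin (2 * n)) (ha : μ ≠ a) (hb : μ ≠ b) :
    Commute (majorana n a * majorana n b) (majorana n μ) := by
  unfold Commute SemiconjBy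
  rw [mul_assoc, maj_anti n b μ hb.symm, Matrix.mul_smul, ← mul_assoc, maj_anti n a μ ha.symm]
  simp [mul_assoc]

/-- Swap two adjacent indices in a set. -/
def sw {N : ℕ} (a b : Fin N) (s : Finset (Fin N)) : Finset (Fin N) :=
  s.map (Equiv.swap a b).toEmbedding

lemma mem_sw {N : ℕ} (a b x : Fin N) (s : Finset (Fin N)) :
    x ∈ sw a b s ↔ Equiv.swap a b x ∈ s := by
  simp [sw, Finset.mem_map_equiv]

lemma sw_sw {N : ℕ} (a b : Fin N) (s : Finset (Fin N)) : sw a b (sw a b s) = s := by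
  ext x; simp [mem_sw]

lemma sw_compl {N : ℕ} (a b : Fin N) (s : Finset (Fin N)) : sw a b sᶜ = (sw a b s)ᶜ := by
  ext x; simp [mem_sw]

lemma sw_card {N : ℕ} (a b : Fin N) (s : Finset (Fin N)) : (sw a b s).card = s.card := by
  simp [sw]

/-- The sign picked up by the commutator with a pair. -/
def ee {N : ℕ} (a b : Fin N) (s : Finset (Fin N)) : ℂ :=
  (if b ∈ s then 1 else 0) - (if a ∈ s then 1 else 0)

lemma ee_sw {N : ℕ} (a b : Fin N) (s : Finset (Fin N)) : ee a b (sw a b s) = - ee a b s := by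
  simp [ee, mem_sw]

lemma ee_compl {N : ℕ} (a b : Fin N) (s : Finset (Fin N)) : ee a b sᶜ = - ee a b s := by
  simp only [ee, Finset.mem_compl]
  split_ifs <;> simp_all

lemma ee_ne_zero {N : ℕ} (a b : Fin N) (s : Finset (Fin N)) :
    ee a b s ≠ 0 ↔ ¬ (a ∈ s ↔ b ∈ s) := by
  simp only [ee]
  split_ifs <;> simp_all

lemma sw_of_iff {N : ℕ} (a b : Fin N) (s : Finset (Fin N)) (h : a ∈ s ↔ b ∈ s) :
    sw a b s = s := by
  ext x
  rw [mem_sw]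
  by_cases hx : x = a
  · subst hx; simp [h]
  · by_cases hx' : x = b
    · subst hx'; simp [h]
    · rw [Equiv.swap_apply_of_ne_of_ne hx hx']

lemma cProd_split (n : ℕ) (a b : Fin (2 * n)) (hab : (b : ℕ) = a + 1)
    (lo hi m : Finset (Fin (2 * n))) (hlo : ∀ x ∈ lo, x < a) (hhi : ∀ x ∈ hi, b < x)
    (hm : ∀ x ∈ m, x = a ∨ x = b) :
    cProd n (lo ∪ (m ∪ hi)) = cProd n lo * (cProd n m * cProd n hi) := by
  have hlt : a < b := by rw [Fin.lt_def]; omega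
  rw [cProd_union, cProd_union]
  · intro x hx y hy
    rcases hm x hx with rfl | rfl
    · exact hlt.trans (hhi y hy)
    · exact hhi y hy
  · intro x hx y hy
    rcases Finset.mem_union.mp hy with hy | hy
    · rcases hm y hy with rfl | rfl
      · exact hlo x hx
      · exact (hlo x hx).trans hlt
    · exact (hlo x hx).trans (hlt.trans (hhi y hy))

lemma cProd_singleton (n : ℕ) (a : Fin (2 * n)) : cProd n {a} = majorana n a := by
  simp [cProd]

lemma comm_cProd (n : ℕ) (a b : Fin (2 * n)) (hab : (b : ℕ) = a + 1) (s : Finset (Fin (2 * n))) :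
    (majorana n a * majorana n b) * cProd n s - cProd n s * (majorana n a * majorana n b)
      = (2 * ee a b s) • cProd n (sw a b s) := by
  have hlt : a < b := by rw [Fin.lt_def]; omega
  set lo := s.filter (· < a) with hlo
  set hi := s.filter (b < ·) with hhi
  set m := s.filter (fun x => x = a ∨ x = b) with hm
  have key : ∀ m' : Finset (Fin (2 * n)), (∀ x ∈ m', x = a ∨ x = b) →
      cProd n (lo ∪ (m' ∪ hi)) = cProd n lo * (cProd n m' * cProd n hi) := fun m' h =>
    cProd_split n a b hab lo hi m' (by simp [hlo]) (by simp [hhi]) h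
  have hs : s = lo ∪ (m ∪ hi) := by
    ext x
    simp only [hlo, hhi, hm, Finset.mem_union, Finset.mem_filter]
    have : x < a ∨ (x = a ∨ x = b) ∨ b < x := by
      simp only [Fin.ext_iff, Fin.lt_def]; omega
    tauto
  have hcs : cProd n s = cProd n lo * (cProd n m * cProd n hi) := by
    conv_lhs => rw [hs]
    exact key m (by simp [hm])
  set P := majorana n a * majorana n b with hP
  have clo : Commute P (cProd n lo) := cProd_comm_of n P lo fun x hx => by
    have : x < a := by simp [hlo] at hx; exact hx.2
    exact pair_comm n a b x this.ne (this.trans hlt).ne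
  have chi : Commute P (cProd n hi) := cProd_comm_of n P hi fun x hx => by
    have : b < x := by simp [hhi] at hx; exact hx.2
    exact pair_comm n a b x (hlt.trans this).ne' this.ne'
  have e1 : P * cProd n s = cProd n lo * ((P * cProd n m) * cProd n hi) := by
    rw [hcs, ← mul_assoc, clo.eq]; simp only [mul_assoc]
  have e2 : cProd n s * P = cProd n lo * ((cProd n m * P) * cProd n hi) := by
    rw [hcs]; simp only [mul_assoc]; rw [chi.eq]
  rw [e1, e2, ← mul_sub, ← sub_mul]
  have sq := maj_sq n
  have anti := maj_anti n b a hlt.ne'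
  have hPP : ∀ m', m = m' → m = m' := fun _ h => h
  by_cases ha : a ∈ s <;> by_cases hb : b ∈ s
  · have : m = {a, b} := by
      ext x; simp only [hm, Finset.mem_filter, Finset.mem_insert, Finset.mem_singleton]
      constructor
      · tauto
      · rintro (rfl | rfl) <;> tauto
    rw [this, cProd_insert n a {b} (by simpa using hlt), cProd_singleton, ← hP]
    simp [ee, ha, hb]
  · have : m = {a} := by
      ext x; simp only [hm, Finset.mem_filter, Finset.mem_singleton]
      constructor
      · rintro ⟨h, rfl | rfl⟩ <;> tauto
      · rintro rfl; tauto
    have h2 : sw a b s = lo ∪ ({b} ∪ hi) := by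
      ext x
      simp only [mem_sw, hlo, hhi, Finset.mem_union, Finset.mem_filter, Finset.mem_singleton]
      by_cases hx : x = a
      · subst hx; simp [hb, hlt.ne, hlt.le]
      · by_cases hx' : x = b
        · subst hx'; simp [ha]
        · rw [Equiv.swap_apply_of_ne_of_ne hx hx']
          have : x < a ∨ b < x := by
            simp only [Fin.ext_iff, Fin.lt_def] at *; omega
          tauto
    rw [this, h2, key {b} (by simp), cProd_singleton, cProd_singleton]
    have h3 : P * majorana n a = (-1 : ℂ) • majorana n b := by
      rw [hP, mul_assoc, anti, Matrix.mul_smul, ← mul_assoc, sq, one_mul]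
    have h4 : majorana n a * P = majorana n b := by
      rw [hP, ← mul_assoc, sq, one_mul]
    rw [h3, h4]
    have : (-1 : ℂ) • majorana n b - majorana n b = (-2 : ℂ) • majorana n b := by module
    rw [this]
    simp [ee, ha, hb]
  · have : m = {b} := by
      ext x; simp only [hm, Finset.mem_filter, Finset.mem_singleton]
      constructor
      · rintro ⟨h, rfl | rfl⟩ <;> tauto
      · rintro rfl; tauto
    have h2 : sw a b s = lo ∪ ({a} ∪ hi) := by
      ext x
      simp only [mem_sw, hlo, hhi, Finset.mem_union, Finset.mem_filter, Finset.mem_singleton]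
      by_cases hx : x = a
      · subst hx; simp [hb]
      · by_cases hx' : x = b
        · subst hx'; simp [ha, hlt.ne', hlt.le]
        · rw [Equiv.swap_apply_of_ne_of_ne hx hx']
          have : x < a ∨ b < x := by
            simp only [Fin.ext_iff, Fin.lt_def] at *; omega
          tauto
    rw [this, h2, key {a} (by simp), cProd_singleton, cProd_singleton]
    have h3 : P * majorana n b = majorana n a := by
      rw [hP, mul_assoc, sq, mul_one]
    have h4 : majorana n b * P = (-1 : ℂ) • majorana n a := by
      rw [hP, ← mul_assoc, anti, Matrix.smul_mul, mul_assoc, sq, mul_one]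
    rw [h3, h4]
    have : majorana n a - (-1 : ℂ) • majorana n a = (2 : ℂ) • majorana n a := by module
    rw [this]
    simp [ee, ha, hb]
  · have : m = ∅ := by
      ext x; simp only [hm, Finset.mem_filter]
      constructor
      · rintro ⟨h, rfl | rfl⟩ <;> tauto
      · simp
    rw [this, cProd_empty]
    simp [ee, ha, hb]

/-- The sign of commuting a Majorana past a product. -/
def chi (N : ℕ) (μ : Fin N) (s : Finset (Fin N)) : ℂ := ∏ a ∈ s, if a = μ then 1 else -1

lemma chi_eq (N : ℕ) (μ : Fin N) (s : Finset (Fin N)) :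
    chi N μ s = (-1) ^ s.card * (if μ ∈ s then -1 else 1) := by
  induction s using Finset.induction_on with
  | empty => simp [chi]
  | insert a s ha ih =>
    rw [chi, Finset.prod_insert ha, ← chi, ih, Finset.card_insert_of_notMem ha]
    by_cases h : a = μ
    · subst h; simp [ha, pow_succ]
    · have h' : μ ≠ a := fun h' => h h'.symm
      simp [h, h', pow_succ]

lemma chi_sq (N : ℕ) (μ : Fin N) (s : Finset (Fin N)) : chi N μ s * chi N μ s = 1 := by
  rw [chi, ← Finset.prod_mul_distrib]
  apply Finset.prod_eq_one
  intro x _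
  split_ifs <;> simp

lemma chi_sep (n : ℕ) (s t : Finset (Fin (2 * n))) (h : s ≠ t) :
    ∃ μ, chi (2 * n) μ s ≠ chi (2 * n) μ t := by
  by_contra! hc
  simp only [chi_eq] at hc
  rcases Nat.even_or_odd s.card with hs | hs <;> rcases Nat.even_or_odd t.card with ht | ht
  · apply h; ext μ; have := hc μ
    rw [hs.neg_one_pow, ht.neg_one_pow] at this
    by_contra hh
    split_ifs at this <;> first | tauto | norm_num at this
  · have : t = sᶜ := by
      ext μ; have := hc μ
      rw [hs.neg_one_pow, ht.neg_one_pow] at this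
      rw [Finset.mem_compl]
      by_contra hh
      split_ifs at this <;> first | tauto | norm_num at this
    have h2 := Finset.card_add_card_compl s
    rw [← this, Fintype.card_fin] at h2
    grind
  · have : t = sᶜ := by
      ext μ; have := hc μ
      rw [hs.neg_one_pow, ht.neg_one_pow] at this
      rw [Finset.mem_compl]
      by_contra hh
      split_ifs at this <;> first | tauto | norm_num at this
    have h2 := Finset.card_add_card_compl s
    rw [← this, Fintype.card_fin] at h2
    grind
  · apply h; ext μ; have := hc μ
    rw [hs.neg_one_pow, ht.neg_one_pow] at this
    by_contra hh
    split_ifs at this <;> first | tauto | norm_num at this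

lemma maj_cProd (n : ℕ) (μ : Fin (2 * n)) (s : Finset (Fin (2 * n))) :
    majorana n μ * cProd n s = chi _ μ s • (cProd n s * majorana n μ) := by
  induction s using Finset.induction_on_min with
  | empty => simp [cProd_empty, chi]
  | insert a s ha ih =>
    have hn : a ∉ s := fun h => lt_irrefl _ (ha a h)
    rw [cProd_insert n a s ha, chi, Finset.prod_insert hn, ← chi]
    by_cases h : a = μ
    · subst h; rw [if_pos rfl, one_mul, mul_assoc, ih, Matrix.mul_smul]
    · rw [if_neg h, ← mul_assoc, maj_anti n μ a (Ne.symm h), Matrix.smul_mul, mul_assoc, ih,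
        Matrix.mul_smul, smul_smul, mul_assoc]

lemma cProd_inv (n : ℕ) (s : Finset (Fin (2 * n))) :
    ∃ D : NMat n, D * cProd n s = 1 ∧ cProd n s * D = 1 ∧
      ∀ μ, majorana n μ * D = chi _ μ s • (D * majorana n μ) := by
  have : IsUnit (cProd n s) := by
    induction s using Finset.induction_on_min with
    | empty => simp [cProd_empty]
    | insert a s ha ih =>
      rw [cProd_insert n a s ha]
      exact IsUnit.mul ⟨⟨_, _, maj_sq n a, maj_sq n a⟩, rfl⟩ ih
  obtain ⟨u, hu⟩ := this
  have h1 : (↑u⁻¹ : NMat n) * cProd n s = 1 := by rw [← hu]; simp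
  have h2 : cProd n s * (↑u⁻¹ : NMat n) = 1 := by rw [← hu]; simp
  refine ⟨↑u⁻¹, h1, h2, fun μ => ?_⟩
  set D := (↑u⁻¹ : NMat n)
  have h3 := maj_cProd n μ s
  calc majorana n μ * D = D * cProd n s * (majorana n μ * D) := by rw [h1, one_mul]
    _ = D * (chi _ μ s • ((chi _ μ s • (cProd n s * majorana n μ)))) * D := by
        rw [smul_smul, chi_sq, one_smul]; simp only [mul_assoc]
    _ = D * (chi _ μ s • (majorana n μ * cProd n s)) * D := by rw [← h3]
    _ = chi _ μ s • (D * majorana n μ * (cProd n s * D)) := by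
        simp only [mul_assoc, Matrix.mul_smul, Matrix.smul_mul]
    _ = _ := by rw [h2, mul_one]

/-- A chosen inverse of `c^s`. -/
def cInv (n : ℕ) (s : Finset (Fin (2 * n))) : NMat n := (cProd_inv n s).choose

lemma trace_cInv (n : ℕ) (s t : Finset (Fin (2 * n))) :
    (cInv n s * cProd n t).trace = if s = t then (2 : ℂ) ^ n else 0 := by
  obtain ⟨h1, h2, h3⟩ := (cProd_inv n s).choose_spec
  split_ifs with h
  · subst h; rw [cInv, h1]; simp
  · obtain ⟨μ, hμ⟩ := chi_sep n s t h
    set D := cInv n s with hD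
    have h3 := h3 μ
    change majorana n μ * D = chi _ μ s • (D * majorana n μ) at h3
    have h4 := maj_cProd n μ t
    have e : majorana n μ * (D * cProd n t) * majorana n μ
        = (chi _ μ s * chi _ μ t) • (D * cProd n t) := by
      rw [← mul_assoc, h3, Matrix.smul_mul, mul_assoc D, h4]
      simp only [Matrix.mul_smul, Matrix.smul_mul, mul_assoc, maj_sq, mul_one, smul_smul]
    have e2 := congrArg Matrix.trace e
    rw [Matrix.trace_mul_comm, ← mul_assoc, maj_sq, one_mul, Matrix.trace_smul, smul_eq_mul] at e2
    have h5 : chi _ μ s * chi _ μ t ≠ 1 := by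
      intro h5
      apply hμ
      calc chi _ μ s = chi _ μ s * (chi _ μ t * chi _ μ t) := by rw [chi_sq, mul_one]
        _ = chi _ μ s * chi _ μ t * chi _ μ t := by ring
        _ = _ := by rw [h5, one_mul]
    by_contra hne
    exact h5 (mul_right_cancel₀ hne (by rw [one_mul]; exact e2.symm))

lemma li2 (n : ℕ) : LinearIndependent ℂ
    (fun p : Finset (Fin (2 * n)) × Finset (Fin (2 * n)) => cProd n p.1 ⊗ₖ cProd n p.2) := by
  rw [Fintype.linearIndependent_iff]
  intro g hg p
  have := congrArg (fun M => ((cInv n p.1 ⊗ₖ cInv n p.2) * M).trace) hg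
  simp only [Matrix.mul_sum, Matrix.mul_smul, ← Matrix.mul_kronecker_mul, Matrix.trace_sum,
    Matrix.trace_smul, Matrix.trace_kronecker, trace_cInv, Matrix.mul_zero, Matrix.trace_zero] at this
  rw [Finset.sum_eq_single p] at this
  · simpa using this
  · intro q _ hq
    have : ¬ (p.1 = q.1 ∧ p.2 = q.2) := fun h => hq (Prod.ext h.1.symm h.2.symm)
    by_cases h1 : p.1 = q.1 <;> by_cases h2 : p.2 = q.2 <;> simp_all
  · simp

/-- The basis `c^s ⊗ c^t`. -/
def bb (n : ℕ) : Module.Basis (Finset (Fin (2 * n)) × Finset (Fin (2 * n))) ℂ (NMat2 n) :=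
  basisOfLinearIndependentOfCardEqFinrank (li2 n) (by
    rw [Module.finrank_matrix]
    simp only [Fintype.card_prod, Fintype.card_finset, Fintype.card_fin, Fintype.card_fun,
      Module.finrank_self]
    ring)

lemma bb_apply (n : ℕ) (s t : Finset (Fin (2 * n))) :
    bb n (s, t) = cProd n s ⊗ₖ cProd n t := by
  simp [bb]

lemma bigH_smul (n : ℕ) (c : ℂ) (H : NMat n) : bigH n (c • H) = c • bigH n H := by
  simp [bigH, Matrix.smul_kronecker, Matrix.kronecker_smul]

lemma gens_iff (n : ℕ) (Q : NMat2 n) :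
    (∀ H ∈ matchgateGens n, bigH n H * Q = Q * bigH n H) ↔
    ∀ a b : Fin (2 * n), (b : ℕ) = a + 1 →
      bigH n (majorana n a * majorana n b) * Q = Q * bigH n (majorana n a * majorana n b) := by
  have hI : ∀ H : NMat n, bigH n (Complex.I • H) * Q = Q * bigH n (Complex.I • H) ↔
      bigH n H * Q = Q * bigH n H := by
    intro H
    rw [bigH_smul, Matrix.smul_mul, Matrix.mul_smul]
    exact smul_right_injective _ Complex.I_ne_zero |>.eq_iff
  constructor
  · intro h a b hab
    obtain ⟨j, hj | hj⟩ := Nat.even_or_odd' (a : ℕ)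
    · rw [pauliZ_eq n ⟨j, by omega⟩ a b hj (by simp; omega), hI]
      exact h _ (Or.inl ⟨_, rfl⟩)
    · rw [pauliXX_eq n ⟨j, by omega⟩ a b hj (by simp; omega), hI]
      exact h _ (Or.inr ⟨_, by simp; omega, rfl⟩)
  · rintro h H (⟨j, rfl⟩ | ⟨j, hj, rfl⟩)
    · rw [← hI, ← pauliZ_eq n j ⟨2 * j, by omega⟩ ⟨2 * j + 1, by omega⟩ rfl rfl]
      exact h _ _ rfl
    · rw [← hI, ← pauliXX_eq n j ⟨2 * j + 1, by omega⟩ ⟨2 * j + 2, by omega⟩ rfl rfl]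
      exact h _ _ rfl

lemma comm_bb (n : ℕ) (a b : Fin (2 * n)) (hab : (b : ℕ) = a + 1) (s t : Finset (Fin (2 * n))) :
    bigH n (majorana n a * majorana n b) * bb n (s, t)
      - bb n (s, t) * bigH n (majorana n a * majorana n b)
    = (2 * ee a b s) • bb n (sw a b s, t) + (2 * ee a b t) • bb n (s, sw a b t) := by
  simp only [bb_apply]
  rw [← Matrix.smul_kronecker, ← Matrix.kronecker_smul, ← comm_cProd n a b hab s,
    ← comm_cProd n a b hab t]
  simp only [bigH, Matrix.add_mul, Matrix.mul_add, ← Matrix.mul_kronecker_mul, Matrix.one_mul,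
    Matrix.mul_one]
  ext i j
  simp only [Matrix.add_apply, Matrix.sub_apply, Matrix.kroneckerMap_apply]
  ring

/-- The swap on subsets as an equivalence. -/
def swE {N : ℕ} (a b : Fin N) : Finset (Fin N) ≃ Finset (Fin N) :=
  Function.Involutive.toPerm (sw a b) (sw_sw a b)

lemma swE_apply {N : ℕ} (a b : Fin N) (s : Finset (Fin N)) : swE a b s = sw a b s := rfl

lemma comm_expand (n : ℕ) (a b : Fin (2 * n)) (hab : (b : ℕ) = a + 1) (Q : NMat2 n) :
    bigH n (majorana n a * majorana n b) * Q - Q * bigH n (majorana n a * majorana n b)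
    = ∑ p : Finset (Fin (2 * n)) × Finset (Fin (2 * n)),
      (-2 * ((bb n).repr Q (sw a b p.1, p.2) * ee a b p.1
        + (bb n).repr Q (p.1, sw a b p.2) * ee a b p.2)) • bb n p := by
  set q := (bb n).repr Q with hq
  set H := bigH n (majorana n a * majorana n b)
  have hQ : Q = ∑ p, q p • bb n p := ((bb n).sum_repr Q).symm
  have h1 : H * Q - Q * H = ∑ p : Finset (Fin (2 * n)) × Finset (Fin (2 * n)),
      (q p • ((2 * ee a b p.1) • bb n (sw a b p.1, p.2))
        + q p • ((2 * ee a b p.2) • bb n (p.1, sw a b p.2))) := by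
    conv_lhs => rw [hQ]
    rw [Matrix.mul_sum, Matrix.sum_mul, ← Finset.sum_sub_distrib]
    refine Finset.sum_congr rfl fun p _ => ?_
    rw [← smul_add, ← comm_bb n a b hab p.1 p.2, smul_sub, Matrix.mul_smul, Matrix.smul_mul]
  rw [h1, Finset.sum_add_distrib]
  rw [← Equiv.sum_comp (Equiv.prodCongr (swE a b) (Equiv.refl _)),
    ← Equiv.sum_comp (Equiv.prodCongr (Equiv.refl _) (swE a b))
      (fun p => q p • ((2 * ee a b p.2) • bb n (p.1, sw a b p.2))), ← Finset.sum_add_distrib]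
  refine Finset.sum_congr rfl fun p _ => ?_
  simp only [Equiv.prodCongr_apply, Prod.map, swE_apply, Equiv.refl_apply,
    sw_sw, ee_sw, Prod.mk.eta]
  module

/-- The coefficient criterion. -/
def Crit (n : ℕ) (q : Finset (Fin (2 * n)) → Finset (Fin (2 * n)) → ℂ) : Prop :=
  ∀ a b : Fin (2 * n), (b : ℕ) = a + 1 → ∀ s t,
    q (sw a b s) t * ee a b s + q s (sw a b t) * ee a b t = 0

lemma crit (n : ℕ) (Q : NMat2 n) :
    (∀ H ∈ matchgateGens n, bigH n H * Q = Q * bigH n H) ↔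
      Crit n (fun s t => (bb n).repr Q (s, t)) := by
  rw [gens_iff]
  refine forall_congr' fun a => forall_congr' fun b => forall_congr' fun hab => ?_
  rw [← sub_eq_zero, comm_expand n a b hab]
  constructor
  · intro h s t
    have := Fintype.linearIndependent_iff.mp (bb n).linearIndependent _ h (s, t)
    simpa using this
  · intro h
    refine Finset.sum_eq_zero fun p _ => ?_
    rw [h p.1 p.2]; simp

lemma crit_supp (n : ℕ) (q) (hq : Crit n q) (s t : Finset (Fin (2 * n))) (h : q s t ≠ 0) :
    t = s ∨ t = sᶜ := by
  have step : ∀ a b : Fin (2 * n), (b : ℕ) = a + 1 → ((a ∈ s ↔ b ∈ s) ↔ (a ∈ t ↔ b ∈ t)) := by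
    intro a b hab
    by_contra hc
    by_cases hs : (a ∈ s ↔ b ∈ s)
    · have ht : ¬ (a ∈ t ↔ b ∈ t) := by tauto
      have := hq a b hab s (sw a b t)
      have e0 : ee a b s = 0 := by by_contra h0; exact (ee_ne_zero a b s).mp h0 hs
      rw [e0, sw_sw, ee_sw] at this
      have e1 := (ee_ne_zero a b t).mpr ht
      simp_all
    · have ht : (a ∈ t ↔ b ∈ t) := by tauto
      have := hq a b hab (sw a b s) t
      have e0 : ee a b t = 0 := by by_contra h0; exact (ee_ne_zero a b t).mp h0 ht
      rw [e0, sw_sw, ee_sw] at this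
      have e1 := (ee_ne_zero a b s).mpr hs
      simp_all
  have all : ∀ k : ℕ, ∀ hk : k < 2 * n, ∀ h0 : 0 < 2 * n,
      (((⟨k, hk⟩ : Fin (2 * n)) ∈ s ↔ (⟨k, hk⟩ : Fin (2 * n)) ∈ t) ↔
        ((⟨0, h0⟩ : Fin (2 * n)) ∈ s ↔ (⟨0, h0⟩ : Fin (2 * n)) ∈ t)) := by
    intro k
    induction k with
    | zero => intros; rfl
    | succ k ih =>
      intro hk h0
      have h1 := ih (by omega) h0
      have h2 := step ⟨k, by omega⟩ ⟨k + 1, hk⟩ rfl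
      tauto
  by_cases h0 : ∀ h0 : 0 < 2 * n, ((⟨0, h0⟩ : Fin (2 * n)) ∈ s ↔ (⟨0, h0⟩ : Fin (2 * n)) ∈ t)
  · left; ext x
    have h2 : 0 < 2 * n := by have := x.2; omega
    have := all x x.2 h2
    have := h0 h2
    simp only [Fin.eta] at *
    tauto
  · right; ext x
    push Not at h0
    obtain ⟨h2, h0⟩ := h0
    have := all x x.2 h2
    simp only [Fin.eta, Finset.mem_compl] at *
    tauto

lemma neg_one_piSum_sw (n : ℕ) (a b : Fin (2 * n)) (hab : (b : ℕ) = a + 1)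
    (s : Finset (Fin (2 * n))) (h : ¬ (a ∈ s ↔ b ∈ s)) :
    (-1 : ℂ) ^ piSum n (sw a b s) = - (-1) ^ piSum n s := by
  have key : ∀ s : Finset (Fin (2 * n)), a ∈ s → b ∉ s →
      (-1 : ℂ) ^ piSum n (sw a b s) = - (-1) ^ piSum n s := by
    intro s ha hb
    have hab' : a ≠ b := by rintro rfl; omega
    have h1 : sw a b s = insert b (s.erase a) := by
      ext x
      rw [mem_sw]
      by_cases hx : x = a
      · subst hx; simp [hb, hab']
      · by_cases hx' : x = b
        · subst hx'; simp [ha]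
        · rw [Equiv.swap_apply_of_ne_of_ne hx hx']; simp [hx, hx']
    have h2 : piSum n (sw a b s) = piSum n s + 1 := by
      rw [h1, piSum, Finset.sum_insert (by simp [hb]), piSum, ← Finset.add_sum_erase s _ ha]
      omega
    rw [h2, pow_succ]; ring
  by_cases ha : a ∈ s
  · exact key s ha (by tauto)
  · have hb : b ∈ s := by tauto
    have := key (sw a b s) (by simpa [mem_sw] using hb) (by simpa [mem_sw] using ha)
    rw [sw_sw] at this
    rw [this, neg_neg]

lemma sw_inv_const {N : ℕ} (f : Finset (Fin N) → ℂ)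
    (hf : ∀ a b : Fin N, (b : ℕ) = a + 1 → ∀ s, f (sw a b s) = f s)
    (s t : Finset (Fin N)) (hst : s.card = t.card) : f s = f t := by
  have perm : ∀ (e : Equiv.Perm (Fin N)) (s : Finset (Fin N)), f (s.map e.toEmbedding) = f s := by
    cases N with
    | zero => intro e s; congr 1; exact Subsingleton.elim _ _
    | succ m =>
      intro e
      have he : e ∈ Submonoid.closure
          (Set.range fun i : Fin m => Equiv.swap i.castSucc i.succ) := by
        rw [Equiv.Perm.mclosure_swap_castSucc_succ]; trivial
      induction he using Submonoid.closure_induction with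
      | mem x hx =>
        obtain ⟨i, rfl⟩ := hx
        intro s
        exact hf i.castSucc i.succ (by simp) s
      | one => intro s; congr 1; ext x; simp [Equiv.Perm.one_symm]
      | mul x y _ _ hx hy =>
        intro s
        rw [← hy s, ← hx (s.map y.toEmbedding)]
        congr 1
        rw [Finset.map_map]; rfl
  have e0 : {x // x ∈ s} ≃ {x // x ∈ t} := Finset.equivOfCardEq hst
  have : s.map (e0.extendSubtype).toEmbedding = t := by
    apply Finset.eq_of_subset_of_card_le
    · intro x hx
      simp only [Finset.mem_map] at hx
      obtain ⟨y, hy, rfl⟩ := hx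
      exact e0.extendSubtype_mem y hy
    · simp [hst]
  rw [← this, perm]

lemma crit_diag (n : ℕ) (q) (hq : Crit n q) (s t : Finset (Fin (2 * n))) (h : s.card = t.card) :
    q s s = q t t := by
  refine sw_inv_const (fun s => q s s) ?_ s t h
  intro a b hab s
  by_cases hs : a ∈ s ↔ b ∈ s
  · simp only [sw_of_iff a b s hs]
  · have h1 := hq a b hab s (sw a b s)
    rw [sw_sw, ee_sw] at h1
    have h2 : (q (sw a b s) (sw a b s) - q s s) * ee a b s = 0 := by linear_combination h1
    have h3 := (mul_eq_zero.mp h2).resolve_right ((ee_ne_zero a b s).mpr hs)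
    exact sub_eq_zero.mp h3

lemma crit_anti (n : ℕ) (q) (hq : Crit n q) (s t : Finset (Fin (2 * n))) (h : s.card = t.card) :
    (-1) ^ piSum n s * q s sᶜ = (-1) ^ piSum n t * q t tᶜ := by
  refine sw_inv_const (fun s => (-1) ^ piSum n s * q s sᶜ) ?_ s t h
  intro a b hab s
  by_cases hs : a ∈ s ↔ b ∈ s
  · simp only [sw_of_iff a b s hs]
  · have h1 := hq a b hab s (sw a b s)ᶜ
    rw [← sw_compl, sw_sw, ee_sw, ee_compl] at h1
    have h2 : (q (sw a b s) (sw a b sᶜ) + q s sᶜ) * ee a b s = 0 := by linear_combination h1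
    have h3 := (mul_eq_zero.mp h2).resolve_right ((ee_ne_zero a b s).mpr hs)
    simp only [neg_one_piSum_sw n a b hab s hs, ← sw_compl]
    linear_combination (-(-1) ^ piSum n s) * h3

lemma Qnorm_ne (n κ : ℕ) (h : κ ≤ 2 * n) : Qnorm n κ ≠ 0 := by
  unfold Qnorm
  have : 0 < Nat.choose (2 * n) κ := Nat.choose_pos h
  have h2 : Real.sqrt (Nat.choose (2 * n) κ) ≠ 0 :=
    Real.sqrt_ne_zero'.mpr (by exact_mod_cast this)
  apply inv_ne_zero
  apply mul_ne_zero (by simp)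
  exact_mod_cast h2

/-- The scalar in `Q1`. -/
def Q1c (n κ : ℕ) : ℂ := Qnorm n κ * (-Complex.I) ^ n * Complex.I ^ (κ % 2)

lemma Q1c_ne (n κ : ℕ) (h : κ ≤ 2 * n) : Q1c n κ ≠ 0 := by
  unfold Q1c
  refine mul_ne_zero (mul_ne_zero (Qnorm_ne n κ h) ?_) ?_ <;> apply pow_ne_zero <;> simp

lemma repr_Q0 (n κ : ℕ) (s t : Finset (Fin (2 * n))) :
    (bb n).repr (Q0 n κ) (s, t) = if t = s ∧ s.card = κ then Qnorm n κ else 0 := by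
  unfold Q0
  simp only [← bb_apply, map_smul, map_sum, Module.Basis.repr_self, Finsupp.smul_apply,
    Finsupp.finsetSum_apply, Finsupp.single_apply, Prod.mk.injEq, smul_eq_mul]
  by_cases h : t = s ∧ s.card = κ
  · obtain ⟨rfl, h⟩ := h
    simp [h, Finset.mem_powersetCard]
  · rw [if_neg h, Finset.sum_eq_zero, mul_zero]
    intro x hx
    rw [if_neg]
    rintro ⟨rfl, rfl⟩
    exact h ⟨rfl, (Finset.mem_powersetCard.mp hx).2⟩

lemma repr_Q1 (n κ : ℕ) (s t : Finset (Fin (2 * n))) :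
    (bb n).repr (Q1 n κ) (s, t)
      = if t = sᶜ ∧ s.card = κ then Q1c n κ * (-1) ^ piSum n s else 0 := by
  unfold Q1
  simp only [← bb_apply, map_smul, map_sum, Module.Basis.repr_self, Finsupp.smul_apply,
    Finsupp.finsetSum_apply, Finsupp.single_apply, Prod.mk.injEq, smul_eq_mul]
  by_cases h : t = sᶜ ∧ s.card = κ
  · obtain ⟨rfl, h⟩ := h
    rw [Finset.sum_eq_single s]
    · simp [h, Q1c]
    · intro x _ hx; simp [hx]
    · intro hs; simp [Finset.mem_powersetCard, h] at hs
  · rw [if_neg h, Finset.sum_eq_zero, mul_zero]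
    intro x hx
    rw [if_neg, mul_zero]
    rintro ⟨rfl, rfl⟩
    exact h ⟨rfl, (Finset.mem_powersetCard.mp hx).2⟩

lemma Q0_mem (n κ : ℕ) : Q0 n κ ∈ quadCommutant n := by
  refine (crit n _).mpr ?_
  intro a b hab s t
  simp only [repr_Q0, sw_card]
  by_cases h : t = sw a b s
  · subst h; simp only [sw_sw, ee_sw]; simp
  · have h' : ¬ sw a b t = s := by rintro rfl; exact h (sw_sw a b t).symm
    simp [h, h']

lemma Q1_mem (n κ : ℕ) : Q1 n κ ∈ quadCommutant n := by
  refine (crit n _).mpr ?_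
  intro a b hab s t
  simp only [repr_Q1, sw_card]
  by_cases h : t = (sw a b s)ᶜ
  · subst h
    by_cases hs : a ∈ s ↔ b ∈ s
    · have e0 : ee a b s = 0 := by by_contra h0; exact (ee_ne_zero a b s).mp h0 hs
      simp [ee_compl, ee_sw, e0]
    · simp only [sw_compl, sw_sw, ee_compl, ee_sw, neg_one_piSum_sw n a b hab s hs]
      split_ifs <;> first | ring | tauto
  · have h' : ¬ sw a b t = sᶜ := by
      intro h'; apply h; rw [← sw_compl, ← h', sw_sw]
    simp [h, h']

/-- The family of all quadratic symmetries. -/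
def fam (n : ℕ) : Fin (2 * n + 1) ⊕ Fin (2 * n + 1) → NMat2 n :=
  Sum.elim (fun κ => Q0 n κ) (fun κ => Q1 n κ)

lemma range_fam (n : ℕ) : Set.range (fam n) =
    {M : NMat2 n | ∃ κ : ℕ, κ ≤ 2 * n ∧ (M = Q0 n κ ∨ M = Q1 n κ)} := by
  ext M
  constructor
  · rintro ⟨κ | κ, rfl⟩
    · exact ⟨κ, by omega, Or.inl rfl⟩
    · exact ⟨κ, by omega, Or.inr rfl⟩
  · rintro ⟨κ, h, rfl | rfl⟩
    · exact ⟨Sum.inl ⟨κ, by omega⟩, rfl⟩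
    · exact ⟨Sum.inr ⟨κ, by omega⟩, rfl⟩

lemma ne_compl (n : ℕ) (hn : 1 ≤ n) (s : Finset (Fin (2 * n))) : s ≠ sᶜ := by
  intro h
  have : (⟨0, by omega⟩ : Fin (2 * n)) ∈ s ↔ (⟨0, by omega⟩ : Fin (2 * n)) ∈ sᶜ := by rw [← h]
  simp at this

lemma exists_set (n : ℕ) (κ : Fin (2 * n + 1)) : ∃ s : Finset (Fin (2 * n)), s.card = κ := by
  obtain ⟨s, _, hs⟩ := Finset.exists_subset_card_eq
    (s := (Finset.univ : Finset (Fin (2 * n)))) (n := κ) (by simp; omega)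
  exact ⟨s, hs⟩

/-- Coefficients of a combination of the family. -/
lemma repr_comb (n : ℕ) (g : Fin (2 * n + 1) ⊕ Fin (2 * n + 1) → ℂ)
    (s t : Finset (Fin (2 * n))) :
    (bb n).repr (∑ i, g i • fam n i) (s, t) =
      (if t = s then g (Sum.inl ⟨s.card, by have := s.card_le_univ; simp at this; omega⟩)
        * Qnorm n s.card else 0) +
      (if t = sᶜ then g (Sum.inr ⟨s.card, by have := s.card_le_univ; simp at this; omega⟩)
        * (Q1c n s.card * (-1) ^ piSum n s) else 0) := by
  have hs : s.card < 2 * n + 1 := by have := s.card_le_univ; simp at this; omega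
  rw [Fintype.sum_sum_type]
  simp only [map_add, map_sum, map_smul, Finsupp.add_apply, Finsupp.finsetSum_apply,
    Finsupp.smul_apply, fam, Sum.elim_inl, Sum.elim_inr, repr_Q0, repr_Q1, smul_eq_mul]
  congr 1
  · rw [Finset.sum_eq_single ⟨s.card, hs⟩]
    · simp
    · intro κ _ hκ
      have : ¬ s.card = κ := fun h => hκ (Fin.ext h.symm)
      simp [this]
    · simp
  · rw [Finset.sum_eq_single ⟨s.card, hs⟩]
    · simp
    · intro κ _ hκ
      have : ¬ s.card = κ := fun h => hκ (Fin.ext h.symm)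
      simp [this]
    · simp

lemma fam_li (n : ℕ) (hn : 1 ≤ n) : LinearIndependent ℂ (fam n) := by
  rw [Fintype.linearIndependent_iff]
  intro g hg i
  have key := repr_comb n g
  rw [hg] at key
  rcases i with κ | κ
  · obtain ⟨s, hs⟩ := exists_set n κ
    have h1 := key s s
    rw [if_pos rfl, if_neg (ne_compl n hn s)] at h1
    have h2 := Qnorm_ne n s.card (by omega)
    simp only [hs, Fin.eta] at h1 h2
    simpa [h2] using h1
  · obtain ⟨s, hs⟩ := exists_set n κ
    have h1 := key s sᶜ
    rw [if_pos rfl, if_neg (ne_compl n hn s).symm] at h1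
    have h2 := Q1c_ne n s.card (by omega)
    simp only [hs, Fin.eta] at h1 h2
    simpa [h2] using h1

lemma fam_span (n : ℕ) (hn : 1 ≤ n) (Q : NMat2 n)
    (hQ : ∀ H ∈ matchgateGens n, bigH n H * Q = Q * bigH n H) :
    Q ∈ Submodule.span ℂ (Set.range (fam n)) := by
  have hc := (crit n Q).mp hQ
  set q := fun s t => (bb n).repr Q (s, t) with hq
  choose S hS using exists_set n
  let g : Fin (2 * n + 1) ⊕ Fin (2 * n + 1) → ℂ :=
    Sum.elim (fun κ => q (S κ) (S κ) / Qnorm n κ)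
      (fun κ => (-1) ^ piSum n (S κ) * q (S κ) (S κ)ᶜ / Q1c n κ)
  have : Q = ∑ i, g i • fam n i := by
    apply (bb n).ext_elem
    rintro ⟨s, t⟩
    rw [repr_comb]
    have hs : s.card < 2 * n + 1 := by have := s.card_le_univ; simp at this; omega
    have h1 := Qnorm_ne n s.card (by omega)
    have h2 := Q1c_ne n s.card (by omega)
    change q s t = _
    by_cases ht : t = s
    · subst ht
      rw [if_pos rfl, if_neg (ne_compl n hn t)]
      simp only [g, Sum.elim_inl, add_zero]
      rw [div_mul_cancel₀ _ h1]
      exact crit_diag n q hc _ _ (hS ⟨t.card, hs⟩).symm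
    · by_cases ht' : t = sᶜ
      · subst ht'
        rw [if_pos rfl, if_neg ht]
        simp only [g, Sum.elim_inr, zero_add]
        rw [← mul_assoc, div_mul_cancel₀ _ h2,
          ← crit_anti n q hc s _ (hS ⟨s.card, hs⟩).symm, mul_right_comm, ← pow_add,
          Even.neg_one_pow ⟨_, rfl⟩, one_mul]
      · rw [if_neg ht, if_neg ht', add_zero]
        by_contra h0
        rcases crit_supp n q hc s t h0 with h | h <;> contradiction
  rw [this]
  exact Submodule.sum_mem _ fun i _ => Submodule.smul_mem _ _ (Submodule.subset_span ⟨i, rfl⟩)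

/-- Every operator commuting with `H ⊗ I + I ⊗ H` for all matchgate generators `H` lies in
the span of the `Q_κ^0, Q_κ^1`; consequently the commutant has dimension `4n + 2`. -/
theorem quadCommutant_eq_span (n : ℕ) (hn : 1 ≤ n) :
    (∀ Q : NMat2 n, (∀ H ∈ matchgateGens n, bigH n H * Q = Q * bigH n H) →
      Q ∈ Submodule.span ℂ
        {M : NMat2 n | ∃ κ : ℕ, κ ≤ 2 * n ∧ (M = Q0 n κ ∨ M = Q1 n κ)})
    ∧ Module.finrank ℂ (quadCommutant n) = 4 * n + 2 := by
  rw [← range_fam]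
  refine ⟨fam_span n hn, ?_⟩
  have : quadCommutant n = Submodule.span ℂ (Set.range (fam n)) := by
    apply le_antisymm
    · intro Q hQ; exact fam_span n hn Q hQ
    · rw [Submodule.span_le]
      rintro _ ⟨κ | κ, rfl⟩
      · exact Q0_mem n κ
      · exact Q1_mem n κ
  rw [this, finrank_span_eq_card (fam_li n hn)]
  simp
  ring

end
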